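/- arXiv:2410.10593 — 7 statements merged into one kernel-verified Lean document; each statement's English description precedes it below -/
import Mathlib

section
/- Let n be a natural number, α and β types, and let i : Fin n → α and j : Fin n → β. Consider the subgroup H = {σ ∈ Perm(Fin n) | i ∘ σ = i} of permutations fixing i, acting on functions Fin n → β by σ • j = j ∘ σ⁻¹. Then the cardinality of the orbit of j under H equals (∏_a (#{x | i x = a})!) / (∏_{(a,b)} (#{x | i x = a and j x = b})!), where the products range over all values a of i and all pairs of values (a,b) of (i,j). In the paper's notation, the orbit size is ξ(i)! / ξ(i,j)!. -/
open scoped BigOperators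

/-! Apply the orbit–stabilizer theorem to the stabilizer `H` of `i` in the symmetric group: the
stabilizer of `j` in `H` is the stabilizer of the paired function `x ↦ (i x, j x)`, and the
stabilizer of any function is the product of the symmetric groups of its fibres. -/

open Finset MulAction
open scoped Nat

section Orbit

variable {G X : Type*} [Group G] [MulAction G X]

theorem ncard_orbit_subgroup_mul_card_inf_stabilizer (H : Subgroup G) (x : X) :
    (orbit H x).ncard * Nat.card ↥(H ⊓ stabilizer G x) = Nat.card H := by
  have orbit_ncard : (orbit H x).ncard = (H ⊓ stabilizer G x).relIndex H := by
    rw [Subgroup.inf_relIndex_left]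
    exact (index_stabilizer H x).symm
  rw [orbit_ncard, mul_comm, ← Subgroup.relIndex_bot_left,
    Subgroup.relIndex_mul_relIndex _ _ _ bot_le inf_le_left, Subgroup.relIndex_bot_left]

end Orbit

section Arrow

attribute [local instance] arrowAction

variable {ι α β : Type*}

theorem perm_smul_arrow_eq_comp_symm (σ : Equiv.Perm ι) (f : ι → α) : σ • f = f ∘ σ.symm :=
  rfl

theorem mem_stabilizer_arrow_iff {σ : Equiv.Perm ι} {f : ι → α} :
    σ ∈ stabilizer (Equiv.Perm ι) f ↔ f ∘ σ = f := by
  rw [mem_stabilizer_iff, perm_smul_arrow_eq_comp_symm, Equiv.comp_symm_eq, eq_comm]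

theorem stabilizer_arrow_prodMk (f : ι → α) (g : ι → β) :
    stabilizer (Equiv.Perm ι) (fun x ↦ (f x, g x)) =
      stabilizer (Equiv.Perm ι) f ⊓ stabilizer (Equiv.Perm ι) g := by
  ext σ
  simp only [Subgroup.mem_inf, mem_stabilizer_arrow_iff, funext_iff, Function.comp_apply,
    Prod.mk.injEq, forall_and]

variable [Fintype ι] [DecidableEq α] [DecidableEq β]

theorem card_stabilizer_arrow (f : ι → α) :
    Nat.card (stabilizer (Equiv.Perm ι) f) = ∏ a ∈ univ.image f, (#{x | f x = a})! := by
  classical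
  calc Nat.card (stabilizer (Equiv.Perm ι) f)
      = Fintype.card {σ : Equiv.Perm ι // f ∘ σ = f} := by
        rw [← Nat.card_eq_fintype_card]
        exact Nat.card_congr (Equiv.subtypeEquivRight fun _ ↦ mem_stabilizer_arrow_iff)
    _ = ∏ a ∈ univ.image f, (#{x | f x = a})! := by
        rw [DomMulAct.stabilizer_card']
        simp only [Fintype.card_subtype]

theorem ncard_orbit_stabilizer_arrow_mul_prod_factorial (f : ι → α) (g : ι → β) :
    (orbit (stabilizer (Equiv.Perm ι) f) g).ncard *
        ∏ ab ∈ univ.image (fun x ↦ (f x, g x)), (#{x | f x = ab.1 ∧ g x = ab.2})! =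
      ∏ a ∈ univ.image f, (#{x | f x = a})! := by
  have card_inf := card_stabilizer_arrow fun x ↦ (f x, g x)
  simp only [Prod.ext_iff] at card_inf
  rw [← card_inf, stabilizer_arrow_prodMk, ncard_orbit_subgroup_mul_card_inf_stabilizer,
    card_stabilizer_arrow]

variable [DecidableEq ι]

theorem coe_image_comp_symm_eq_orbit (f : ι → α) (g : ι → β) :
    ((univ.filter fun σ : Equiv.Perm ι ↦ f ∘ σ = f).image fun σ ↦ g ∘ σ.symm : Set (ι → β)) =
      orbit (stabilizer (Equiv.Perm ι) f) g := by
  ext k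
  simp only [coe_image, coe_filter, mem_univ, true_and, Set.mem_image, Set.mem_ofPred_eq,
    mem_orbit_iff, Subtype.exists, Subgroup.mk_smul, mem_stabilizer_arrow_iff,
    perm_smul_arrow_eq_comp_symm, exists_prop]

theorem stmt2_general (i : ι → α) (j : ι → β) :
    #((univ.filter fun σ : Equiv.Perm ι ↦ i ∘ σ = i).image fun σ ↦ j ∘ σ.symm) =
      (∏ a ∈ univ.image i, (#{x | i x = a})!) /
        ∏ ab ∈ univ.image (fun x ↦ (i x, j x)), (#{x | i x = ab.1 ∧ j x = ab.2})! := by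
  rw [← Set.ncard_coe_finset, coe_image_comp_symm_eq_orbit]
  exact Nat.eq_div_of_mul_eq_left (prod_ne_zero_iff.mpr fun _ _ ↦ Nat.factorial_ne_zero _)
    (ncard_orbit_stabilizer_arrow_mul_prod_factorial i j)

end Arrow

/-- The size of the orbit of `j` under the permutations fixing `i` (acting by
`σ • j = j ∘ σ⁻¹`) is `ξ(i)! / ξ(i,j)!`. -/
theorem stmt2 {n : ℕ} {α β : Type*} [DecidableEq α] [DecidableEq β]
    (i : Fin n → α) (j : Fin n → β) :
    (Finset.image (fun σ : Equiv.Perm (Fin n) => j ∘ ⇑σ.symm)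
        (Finset.univ.filter fun σ : Equiv.Perm (Fin n) => i ∘ ⇑σ = i)).card =
      (∏ a ∈ Finset.univ.image i,
          (Finset.univ.filter fun x : Fin n => i x = a).card.factorial) /
        (∏ ab ∈ Finset.univ.image (fun x : Fin n => (i x, j x)),
          (Finset.univ.filter fun x : Fin n => i x = ab.1 ∧ j x = ab.2).card.factorial) :=
  stmt2_general i j
end

section
/- Let R be a commutative ring and work in the polynomial ring R[X_{(r,s)}] in commuting variables X_{(r,s)} indexed by pairs (r,s) with r a row label and s a site index. For a tuple (i₁,…,i_k) of site indices, define the Slater operator S(i₁,…,i_k) = det of the k×k matrix whose (r,c) entry is X_{(r,i_c)}. Then for all p ≥ q ≥ 1 and all site indices u₁,…,u_p and w₁,…,w_q, the exchange (Sylvester) relation holds: S(u₁,…,u_p) · S(w₁,…,w_q) = Σ_{j=1}^{p} S(u₁,…,u_{j−1}, w₁, u_{j+1},…,u_p) · S(u_j, w₂,…,w_q). -/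
open scoped BigOperators

/-- The Slater operator `S(i₁,…,i_k)`: the determinant of the `k × k` matrix whose
`(r,c)` entry is the commuting variable `X (r, i c)`. -/
noncomputable def slaterOp {R : Type*} [CommRing R] {α : Type*} {k : ℕ} (i : Fin k → α) :
    MvPolynomial (ℕ × α) R :=
  (Matrix.of fun r c : Fin k => MvPolynomial.X ((r : ℕ), i c)).det

/-!
Cramer's rule writes `det A • b = ∑ j, det (A with column j replaced by b) • (column j of A)`.
Take for `A` the matrix of `S(u₁,…,u_p)` and for `b` the `p`-row column of `w₁`, and apply the
linear functional that truncates a column to its first `q` rows, puts it in place of the first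
column of the matrix of `S(w₁,…,w_q)` and takes the determinant.
-/

section Cramer

open Matrix

variable {R : Type*} [CommRing R] {m : Type*} [Fintype m] [DecidableEq m]

theorem det_smul_eq_sum_cramer_smul_col (A : Matrix m m R) (b : m → R) :
    A.det • b = ∑ j, A.cramer b j • A.col j := by
  simp only [← mulVec_cramer, mulVec_eq_sum, op_smul_eq_smul, col]

theorem det_smul_map_eq_sum_cramer_smul_map_col {N : Type*} [AddCommMonoid N] [Module R N]
    (φ : (m → R) →ₗ[R] N) (A : Matrix m m R) (b : m → R) :
    A.det • φ b = ∑ j, A.cramer b j • φ (A.col j) := by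
  simp only [← map_smul, ← map_sum, ← det_smul_eq_sum_cramer_smul_col]

end Cramer

section Submatrix

open Matrix

variable {R m n α : Type*} [DecidableEq n]

theorem submatrix_update_right {k : Type*} (M : Matrix m α R) (f : k → m) (w : n → α) (l : n)
    (x : α) :
    M.submatrix f (Function.update w l x) = (M.submatrix f w).updateCol l (M.col x ∘ f) := by
  ext r c
  obtain rfl | h := eq_or_ne c l
  · simp
  · simp [h]

theorem cramer_submatrix_col [CommRing R] [Fintype n] (M : Matrix m α R) (f : n → m) (w : n → α)
    (x : α) (l : n) :
    (M.submatrix f w).cramer (M.col x ∘ f) l = (M.submatrix f (Function.update w l x)).det := by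
  rw [cramer_apply, submatrix_update_right]

end Submatrix

theorem stmt3_general {R : Type*} [CommRing R] {m n α : Type*} [Fintype m] [DecidableEq m]
    [Fintype n] [DecidableEq n] (M : Matrix m α R) (f : n → m) (u : m → α) (w : n → α) (l : n) :
    (M.submatrix id u).det * (M.submatrix f w).det =
      ∑ j, (M.submatrix id (Function.update u j (w l))).det *
        (M.submatrix f (Function.update w l (u j))).det := by
  let φ : (m → R) →ₗ[R] R :=
    LinearMap.proj l ∘ₗ (M.submatrix f w).cramer ∘ₗ LinearMap.funLeft R R f
  have hφ (x : α) : φ (M.col x) = (M.submatrix f (Function.update w l x)).det :=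
    cramer_submatrix_col M f w x l
  calc (M.submatrix id u).det * (M.submatrix f w).det
      = (M.submatrix id u).det • φ (M.col (w l)) := by
        rw [hφ, Function.update_eq_self, smul_eq_mul]
    _ = ∑ j, (M.submatrix id u).cramer (M.col (w l)) j • φ (M.col (u j)) :=
        det_smul_map_eq_sum_cramer_smul_map_col φ _ _
    _ = _ := Finset.sum_congr rfl fun j _ =>
        congrArg₂ (· * ·) (cramer_submatrix_col M id u (w l) j) (hφ (u j))

/-- The Sylvester exchange relation between Slater operators: for `p ≥ q ≥ 1`,
`S(u₁,…,u_p)·S(w₁,…,w_q) = Σ_{j=1}^p S(u₁,…,u_{j−1},w₁,u_{j+1},…,u_p)·S(u_j,w₂,…,w_q)`. -/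
theorem stmt3 {R : Type*} [CommRing R] {α : Type*} {p q : ℕ} (hq : 1 ≤ q) (hpq : q ≤ p)
    (u : Fin p → α) (w : Fin q → α) :
    slaterOp (R := R) u * slaterOp (R := R) w =
      ∑ j : Fin p,
        slaterOp (R := R) (Function.update u j (w ⟨0, hq⟩)) *
          slaterOp (R := R) (Function.update w ⟨0, hq⟩ (u j)) :=
  stmt3_general (Matrix.of fun (r : Fin p) a => MvPolynomial.X ((r : ℕ), a)) (Fin.castLE hpq)
    u w ⟨0, hq⟩
end

section
/- Fix natural numbers N and m, work in the polynomial ring R[X_{(r,s)}] in commuting variables indexed by (r,s) ∈ Fin N × Fin m over a commutative ring R, and for k ≤ min(N,m) let D_k = det of the k×k matrix with (r,c) entry X_{(r,c)} (the top-left generic minor, which is the Slater operator S(1,2,…,k)). Let λ be a Young diagram whose column lengths k₁,…,k_p are all at most min(N,m), and let Y(h_λ) = D_{k₁}···D_{k_p} be the Young operator of the tableau h_λ whose r-th row is filled with the entry r. Then for all x < y in Fin m, the derivation E_{x,y} = Σ_{r ∈ Fin N} X_{(r,x)} · ∂/∂X_{(r,y)} annihilates Y(h_λ): E_{x,y}(Y(h_λ))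 = 0. (Y(h_λ) is a highest weight vector.) -/
open scoped BigOperators

/-- The top-left `k × k` generic minor `D_k = S(1,…,k)`: the determinant of the `k × k`
matrix whose `(r,c)` entry is the variable `X (r, c)`. -/
noncomputable def genericMinor (R : Type*) [CommRing R] {N m : ℕ} (k : ℕ)
    (hN : k ≤ N) (hm : k ≤ m) : MvPolynomial (Fin N × Fin m) R :=
  (Matrix.of fun r c : Fin k =>
    MvPolynomial.X (Fin.castLE hN r, Fin.castLE hm c)).det

/-!
A derivation differentiates a determinant one column at a time. The derivation `E_{x,y}` sends
column `x'` of the generic matrix to column `x` if `x' = y` and to `0` otherwise. If a minor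
contains column `x` whenever it contains column `y`, each term of the expansion therefore has a
zero column or two equal columns and vanishes; by the Leibniz rule, products of such minors are
killed too. The top-left minors have this property because `x < y`.
-/

section Derivation

variable {R A ι n : Type*} [CommSemiring R]

theorem derivation_prod {M : Type*} [CommSemiring A] [AddCommMonoid M] [Algebra R A] [Module A M]
    [Module R M] [DecidableEq ι] (D : Derivation R A M) (s : Finset ι) (f : ι → A) :
    D (∏ i ∈ s, f i) = ∑ i ∈ s, (∏ j ∈ s.erase i, f j) • D (f i) := by
  induction s using Finset.induction_on with
  | empty => simp
  | insert a s ha ih =>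
    have prod_erase_insert : ∀ i ∈ s,
        ∏ j ∈ (insert a s).erase i, f j = f a * ∏ j ∈ s.erase i, f j := fun i hi ↦ by
      rw [Finset.erase_insert_of_ne (ne_of_mem_of_not_mem hi ha).symm,
        Finset.prod_insert (fun h ↦ ha (Finset.mem_of_mem_erase h))]
    rw [Finset.prod_insert ha, D.leibniz, ih, Finset.sum_insert ha, Finset.erase_insert ha,
      Finset.smul_sum, add_comm]
    congr 1
    exact Finset.sum_congr rfl fun i hi ↦ by rw [prod_erase_insert i hi, mul_smul]

theorem derivation_prod_eq_zero {M : Type*} [CommSemiring A] [AddCommMonoid M] [Algebra R A]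
    [Module A M] [Module R M] (D : Derivation R A M) (s : Finset ι) (f : ι → A)
    (hf : ∀ i ∈ s, D (f i) = 0) : D (∏ i ∈ s, f i) = 0 := by
  classical
  rw [derivation_prod]
  exact Finset.sum_eq_zero fun i hi ↦ by rw [hf i hi, smul_zero]

variable [CommRing A] [Algebra R A] [Fintype n] [DecidableEq n]

theorem derivation_det (D : Derivation R A A) (M : Matrix n n A) :
    D M.det = ∑ c, (M.updateCol c fun r ↦ D (M r c)).det := by
  have prod_updateCol (σ : Equiv.Perm n) (c : n) :
      ∏ i, M.updateCol c (fun r ↦ D (M r c)) (σ i) i =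
        (∏ i ∈ Finset.univ.erase c, M (σ i) i) * D (M (σ c) c) := by
    rw [← Finset.prod_erase_mul _ _ (Finset.mem_univ c), Matrix.updateCol_self]
    congr 1
    exact Finset.prod_congr rfl fun i hi ↦ Matrix.updateCol_ne (Finset.ne_of_mem_erase hi)
  simp only [Matrix.det_apply, map_sum, Units.smul_def, map_zsmul, derivation_prod, smul_eq_mul,
    prod_updateCol, Finset.smul_sum]
  exact Finset.sum_comm

theorem derivation_det_eq_zero (D : Derivation R A A) (M : Matrix n n A)
    (hM : ∀ c, (∀ r, D (M r c) = 0) ∨ ∃ c' ≠ c, ∀ r, D (M r c) = M r c') :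
    D M.det = 0 := by
  rw [derivation_det]
  refine Finset.sum_eq_zero fun c _ ↦ ?_
  rcases hM c with hzero | ⟨c', hne, hcol⟩
  · exact Matrix.det_eq_zero_of_column_eq_zero c fun r ↦ by rw [Matrix.updateCol_self, hzero]
  · simp only [hcol]
    exact Matrix.det_updateCol_eq_zero hne

end Derivation

section Polarization

open MvPolynomial

variable (R : Type*) {ρ σ : Type*}

/-- The action of the element `E_{x,y}` of `gl` on polynomials in the entries of the generic
`ρ × σ` matrix, classically called a polarization operator: the derivation
`∑ r, X (r, x) ∂/∂X (r, y)`. -/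
noncomputable def polarization [CommSemiring R] [Fintype ρ] (x y : σ) :
    Derivation R (MvPolynomial (ρ × σ) R) (MvPolynomial (ρ × σ) R) :=
  ∑ r : ρ, (X (r, x) : MvPolynomial (ρ × σ) R) • pderiv (r, y)

/-- The Slater operator on the sites `col`: the minor of the generic `ρ × σ` matrix with rows `row`
and columns `col`. The paper always takes the first rows; here they are arbitrary. -/
noncomputable def slaterOperator [CommRing R] {n : Type*} [Fintype n] [DecidableEq n]
    (row : n → ρ) (col : n → σ) : MvPolynomial (ρ × σ) R :=
  ((Matrix.mvPolynomialX ρ σ R).submatrix row col).det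

theorem genericMinor_eq_slaterOperator [CommRing R] {N m k : ℕ} (hN : k ≤ N) (hm : k ≤ m) :
    genericMinor R k hN hm = slaterOperator R (Fin.castLE hN) (Fin.castLE hm) :=
  rfl

variable {R} [Fintype ρ] {x y : σ}

theorem polarization_apply [CommSemiring R] (f : MvPolynomial (ρ × σ) R) :
    polarization R x y f = ∑ r, X (r, x) * pderiv (r, y) f := by
  simp only [polarization, ← Derivation.coeFnAddMonoidHom_apply, map_sum, Finset.sum_apply]
  rfl

theorem polarization_X_self [CommSemiring R] (r : ρ) :
    polarization R x y (X (r, y)) = X (r, x) := by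
  classical
  simp [polarization_apply, pderiv_X, Pi.single_apply]

theorem polarization_X_of_ne [CommSemiring R] {s : σ} (hs : s ≠ y) (r : ρ) :
    polarization R x y (X (r, s)) = 0 := by
  classical
  simp [polarization_apply, pderiv_X, hs]

theorem polarization_slaterOperator_eq_zero [CommRing R] {n : Type*} [Fintype n] [DecidableEq n]
    (row : n → ρ) (col : n → σ) (hxy : x ≠ y)
    (hcol : y ∈ Set.range col → x ∈ Set.range col) :
    polarization R x y (slaterOperator R row col) = 0 := by
  refine derivation_det_eq_zero _ _ fun c ↦ ?_
  simp only [Matrix.submatrix_apply, Matrix.mvPolynomialX_apply]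
  by_cases hc : col c = y
  · obtain ⟨c', hc'⟩ := hcol ⟨c, hc⟩
    have hne : c' ≠ c := by
      rintro rfl
      exact hxy (hc'.symm.trans hc)
    exact Or.inr ⟨c', hne, fun r ↦ by rw [hc, hc', polarization_X_self]⟩
  · exact Or.inl fun r ↦ polarization_X_of_ne hc (row r)

theorem stmt6_general [CommRing R] {ι : Type*} (s : Finset ι) {n : ι → Type*}
    [∀ j, Fintype (n j)] [∀ j, DecidableEq (n j)] (row : ∀ j, n j → ρ) (col : ∀ j, n j → σ)
    (hxy : x ≠ y) (hcol : ∀ j ∈ s, y ∈ Set.range (col j) → x ∈ Set.range (col j)) :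
    polarization R x y (∏ j ∈ s, slaterOperator R (row j) (col j)) = 0 :=
  derivation_prod_eq_zero _ s _ fun j hj ↦
    polarization_slaterOperator_eq_zero (row j) (col j) hxy (hcol j hj)

end Polarization

theorem isLowerSet_range_castLE {k m : ℕ} (h : k ≤ m) : IsLowerSet (Set.range (Fin.castLE h)) := by
  intro y x hxy hy
  rw [Fin.range_castLE] at hy ⊢
  exact lt_of_le_of_lt (Fin.le_def.mp hxy) hy

/-- The Young operator `Y(h_λ)` of the highest-weight tableau of a diagram with column
lengths `k₁,…,k_p` (all at most `min(N,m)`) is annihilated by the raising derivations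
`E_{x,y} = Σ_r X_{(r,x)} ∂/∂X_{(r,y)}` for `x < y`: it is a highest weight vector. -/
theorem stmt6 {R : Type*} [CommRing R] {N m p : ℕ} (k : Fin p → ℕ)
    (hN : ∀ j, k j ≤ N) (hm : ∀ j, k j ≤ m) (x y : Fin m) (hxy : x < y) :
    (∑ r : Fin N,
        MvPolynomial.X (r, x) *
          MvPolynomial.pderiv (r, y) (∏ j, genericMinor R (k j) (hN j) (hm j))) = 0 := by
  simp only [← polarization_apply, genericMinor_eq_slaterOperator]
  exact stmt6_general _ _ _ hxy.ne fun j _ ↦ isLowerSet_range_castLE (hm j) hxy.le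
end

section
/- For all natural numbers a, b, n, the number of a×b matrices with entries in ℕ whose entries sum to n equals Σ_μ (number of semistandard Young tableaux of shape μ with entries in {1,…,a}) × (number of semistandard Young tableaux of shape μ with entries in {1,…,b}), where the sum runs over all Young diagrams μ with exactly n cells. (Combinatorial Cauchy identity via the Robinson–Schensted–Knuth correspondence.) -/
open scoped BigOperators

/-!
In Fomin's growth diagram of an `a × b` matrix, the vertices of the `a × b` grid carry Young
diagrams which grow by a horizontal strip along every edge and are empty on the two sides through
the origin. For a unit square with corners `κ`, `μ`, `ν`, `ρ`, where `κ` is nearest to the origin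
and `ρ` farthest from it, and with matrix entry `t`, there is a local bijection
`(κ, t) ↔ ρ` at fixed `μ` and `ν`, and `|ρ| + |κ| = |μ| + |ν| + t`. Hence the matrix determines
the diagrams on the two far sides and is recovered from them. Each far side is a chain of
horizontal strips from `∅` to the far corner, that is, a semistandard tableau, and the size of the
far corner is the sum of the matrix entries.
-/

open YoungDiagram

namespace RSK

section RowLengths

theorem rowLen_injective : Function.Injective rowLen := by
  intro μ ν h
  ext ⟨i, j⟩
  rw [mem_cells, mem_cells, mem_iff_lt_rowLen, mem_iff_lt_rowLen, h]

theorem exists_rowLen_eq_zero (μ : YoungDiagram) : ∃ N, μ.rowLen N = 0 := by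
  refine ⟨μ.colLen 0, Nat.eq_zero_of_not_pos fun h => ?_⟩
  exact lt_irrefl _ (mem_iff_lt_colLen.1 (mem_iff_lt_rowLen.2 h))

theorem card_eq_sum_rowLen {μ : YoungDiagram} {N : ℕ} (hN : μ.rowLen N = 0) :
    μ.card = ∑ i ∈ Finset.range N, μ.rowLen i := by
  have fst_lt : ∀ c ∈ μ.cells, c.1 ∈ Finset.range N := by
    rintro ⟨i, j⟩ hc
    rw [mem_cells, mem_iff_lt_rowLen] at hc
    refine Finset.mem_range.2 (not_le.1 fun hi => ?_)
    have := μ.rowLen_anti N i hi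
    omega
  rw [YoungDiagram.card, Finset.card_eq_sum_card_fiberwise fst_lt]
  exact Finset.sum_congr rfl fun i _ => μ.rowLen_eq_card.symm

/-- The Young diagram whose `i`-th row has length `f i`. It complements
`YoungDiagram.ofRowLens`, which takes a list, for row lengths given by a formula in `i`. -/
def diagramOfRowLen (f : ℕ → ℕ) (hf : Antitone f) (hz : ∃ N, f N = 0) : YoungDiagram :=
  ofRowLens ((List.range (Nat.find hz)).map f)
    (List.sortedGE_iff_pairwise.2 <| List.pairwise_map.2 <|
      List.pairwise_lt_range.imp fun h => hf h.le)

@[simp]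
theorem rowLen_diagramOfRowLen {f : ℕ → ℕ} (hf : Antitone f) (hz : ∃ N, f N = 0) :
    (diagramOfRowLen f hf hz).rowLen = f := by
  funext i
  refine eq_of_forall_lt_iff fun j => ?_
  have lt_find (hj : j < f i) : i < Nat.find hz := by
    by_contra! hi
    have := hf hi
    have := Nat.find_spec hz
    omega
  rw [← mem_iff_lt_rowLen, diagramOfRowLen, mem_ofRowLens]
  simpa using lt_find

end RowLengths

/-- Interlacing of sequences, `g 0 ≥ f 0 ≥ g 1 ≥ f 1 ≥ ⋯`. For the row lengths of two Young
diagrams it says that the second is obtained from the first by adding a horizontal strip. -/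
def Interlaces (f g : ℕ → ℕ) : Prop :=
  ∀ i, g (i + 1) ≤ f i ∧ f i ≤ g i

local notation:50 κ:51 " ≺ " μ:51 => Interlaces (rowLen κ) (rowLen μ)

namespace Interlaces

variable {f g : ℕ → ℕ}

theorem antitone_left (h : Interlaces f g) : Antitone f :=
  antitone_nat_of_succ_le fun i => (h (i + 1)).2.trans (h i).1

theorem antitone_right (h : Interlaces f g) : Antitone g :=
  antitone_nat_of_succ_le fun i => (h i).1.trans (h i).2

theorem left_eq_zero (h : Interlaces f g) {N : ℕ} (hg : g N = 0) : f N = 0 :=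
  Nat.eq_zero_of_le_zero ((h N).2.trans_eq hg)

theorem right_eq_zero (h : Interlaces f g) {N : ℕ} (hf : f N = 0) : g (N + 1) = 0 :=
  Nat.eq_zero_of_le_zero ((h N).1.trans_eq hf)

end Interlaces

theorem interlaces_rowLen_iff {κ μ : YoungDiagram} :
    κ ≺ μ ↔ κ ≤ μ ∧ ∀ i j, (i + 1, j) ∈ μ → (i, j) ∈ κ := by
  have le_iff : κ ≤ μ ↔ ∀ i j, (i, j) ∈ κ → (i, j) ∈ μ :=
    ⟨fun h i j hc => h hc, fun h ⟨i, j⟩ hc => h i j hc⟩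
  simp only [Interlaces, le_iff, mem_iff_lt_rowLen, forall_and, ← forall_lt_iff_le]
  exact and_comm

theorem interlaces_rowLen_self (μ : YoungDiagram) : μ ≺ μ :=
  fun i => ⟨μ.rowLen_anti _ _ i.le_succ, le_rfl⟩

section LocalRule

/-- Fomin's local rule for a unit square of the growth diagram of RSK, on row lengths: `k` is the
corner next to the origin, `m` and `n` are the two side corners, `t` is the matrix entry in the
square, and the result is the far corner. -/
def grow (k m n : ℕ → ℕ) (t : ℕ) : ℕ → ℕ
  | 0 => max (m 0) (n 0) + t
  | i + 1 => max (m (i + 1)) (n (i + 1)) + min (m i) (n i) - k i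

/-- The inverse local rule, recovering the corner next to the origin from the side corners `m`, `n`
and the far corner `r`. -/
def shrink (m n r : ℕ → ℕ) (i : ℕ) : ℕ :=
  max (m (i + 1)) (n (i + 1)) + min (m i) (n i) - r (i + 1)

variable {k m n r : ℕ → ℕ}

theorem grow_comm (k m n : ℕ → ℕ) (t : ℕ) : grow k m n t = grow k n m t := by
  funext i
  cases i <;> simp only [grow, max_comm, min_comm]

theorem shrink_comm (m n r : ℕ → ℕ) : shrink m n r = shrink n m r := by
  funext i
  simp only [shrink, max_comm, min_comm]

theorem interlaces_grow_left (hm : Interlaces k m) (hn : Interlaces k n) (t : ℕ) :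
    Interlaces m (grow k m n t) := by
  rintro (_ | i)
  · grind [grow, hm 0, hn 0]
  · grind [grow, hm i, hn i, hm (i + 1), hn (i + 1)]

theorem interlaces_grow_right (hm : Interlaces k m) (hn : Interlaces k n) (t : ℕ) :
    Interlaces n (grow k m n t) :=
  grow_comm k n m t ▸ interlaces_grow_left hn hm t

theorem interlaces_shrink_left (hm : Interlaces m r) (hn : Interlaces n r) :
    Interlaces (shrink m n r) m := by
  intro i
  grind [shrink, hm i, hn i, hm (i + 1), hn (i + 1)]

theorem interlaces_shrink_right (hm : Interlaces m r) (hn : Interlaces n r) :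
    Interlaces (shrink m n r) n :=
  shrink_comm n m r ▸ interlaces_shrink_left hn hm

theorem shrink_grow (hm : Interlaces k m) (hn : Interlaces k n) (t : ℕ) :
    shrink m n (grow k m n t) = k := by
  funext i
  grind [shrink, grow, hm i, hn i]

theorem grow_shrink (hm : Interlaces m r) (hn : Interlaces n r) :
    grow (shrink m n r) m n (r 0 - max (m 0) (n 0)) = r := by
  funext i
  cases i with
  | zero => grind [grow, hm 0, hn 0]
  | succ i => grind [shrink, grow, hm i, hn i, hm (i + 1), hn (i + 1)]

theorem sum_grow (hm : Interlaces k m) (hn : Interlaces k n) (t N : ℕ) :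
    ∑ i ∈ Finset.range (N + 1), grow k m n t i + ∑ i ∈ Finset.range N, k i =
      ∑ i ∈ Finset.range N, m i + ∑ i ∈ Finset.range N, n i + max (m N) (n N) + t := by
  induction N with
  | zero => simp [grow]
  | succ N ih =>
    have max_add_min := max_add_min (m N) (n N)
    have k_le : k N ≤ min (m N) (n N) := le_min (hm N).2 (hn N).2
    rw [Finset.sum_range_succ _ (N + 1), Finset.sum_range_succ k, Finset.sum_range_succ m,
      Finset.sum_range_succ n, grow]
    omega

variable {μ ν : YoungDiagram}

/-- The local rule as a bijection: given the side corners `μ` and `ν` of a square, the corner next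
to the origin and the matrix entry determine the far corner and are determined by it. -/
def localRule (μ ν : YoungDiagram) :
    {κ // κ ≺ μ ∧ κ ≺ ν} × ℕ ≃ {ρ // μ ≺ ρ ∧ ν ≺ ρ} where
  toFun p :=
    have left := interlaces_grow_left p.1.2.1 p.1.2.2 p.2
    have right := interlaces_grow_right p.1.2.1 p.1.2.2 p.2
    ⟨diagramOfRowLen (grow p.1.1.rowLen μ.rowLen ν.rowLen p.2) left.antitone_right
      ((exists_rowLen_eq_zero μ).imp' _ fun _ => left.right_eq_zero), by simpa using ⟨left, right⟩⟩
  invFun ρ :=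
    have left := interlaces_shrink_left ρ.2.1 ρ.2.2
    have right := interlaces_shrink_right ρ.2.1 ρ.2.2
    (⟨diagramOfRowLen (shrink μ.rowLen ν.rowLen ρ.1.rowLen) left.antitone_left
      ((exists_rowLen_eq_zero μ).imp fun _ => left.left_eq_zero), by simpa using ⟨left, right⟩⟩,
      ρ.1.rowLen 0 - max (μ.rowLen 0) (ν.rowLen 0))
  left_inv := by
    rintro ⟨⟨κ, hμ, hν⟩, t⟩
    refine Prod.ext (Subtype.ext (rowLen_injective ?_)) ?_
    · simp [shrink_grow hμ hν]
    · simp [grow]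
  right_inv := by
    rintro ⟨ρ, hμ, hν⟩
    refine Subtype.ext (rowLen_injective ?_)
    simp [grow_shrink hμ hν]

theorem rowLen_localRule (p : {κ // κ ≺ μ ∧ κ ≺ ν} × ℕ) :
    (localRule μ ν p).1.rowLen = grow p.1.1.rowLen μ.rowLen ν.rowLen p.2 :=
  rowLen_diagramOfRowLen (interlaces_grow_left p.1.2.1 p.1.2.2 p.2).antitone_right _

theorem card_localRule (p : {κ // κ ≺ μ ∧ κ ≺ ν} × ℕ) :
    (localRule μ ν p).1.card + p.1.1.card = μ.card + ν.card + p.2 := by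
  obtain ⟨N, hρ⟩ := exists_rowLen_eq_zero (localRule μ ν p).1
  have hμ : μ.rowLen N = 0 := (localRule μ ν p).2.1.left_eq_zero hρ
  have hν : ν.rowLen N = 0 := (localRule μ ν p).2.2.left_eq_zero hρ
  have hκ : p.1.1.rowLen N = 0 := p.1.2.1.left_eq_zero hμ
  have hρ' : (localRule μ ν p).1.rowLen (N + 1) = 0 := (localRule μ ν p).2.1.right_eq_zero hμ
  rw [card_eq_sum_rowLen hρ', card_eq_sum_rowLen hκ, card_eq_sum_rowLen hμ,
    card_eq_sum_rowLen hν, rowLen_localRule, sum_grow p.1.2.1 p.1.2.2, hμ, hν, max_self, add_zero]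

end LocalRule
section Tableaux

variable {a : ℕ} {κ μ ν : YoungDiagram}

/-- The shape formed by the cells of `T` whose entry is `< a`. -/
def sublevel (T : SemistandardYoungTableau ν) (a : ℕ) : YoungDiagram where
  cells := ν.cells.filter fun c => T c.1 c.2 < a
  isLowerSet := by
    rintro ⟨i₂, j₂⟩ ⟨i₁, j₁⟩ ⟨hi : i₁ ≤ i₂, hj : j₁ ≤ j₂⟩ hc
    simp only [Finset.coe_filter, mem_cells, Set.mem_ofPred_eq] at hc ⊢
    have col := T.col_weak hi (ν.up_left_mem le_rfl hj hc.1)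
    have row := T.row_weak_of_le hj hc.1
    exact ⟨ν.up_left_mem hi hj hc.1, (col.trans row).trans_lt hc.2⟩

theorem mem_sublevel {T : SemistandardYoungTableau ν} {i j : ℕ} :
    (i, j) ∈ sublevel T a ↔ (i, j) ∈ ν ∧ T i j < a := by
  rw [← mem_cells, sublevel, Finset.mem_filter, mem_cells]

theorem sublevel_le (T : SemistandardYoungTableau ν) (a : ℕ) : sublevel T a ≤ ν :=
  fun _ hc => (mem_sublevel.1 hc).1

/-- The restriction of a tableau to a smaller shape. -/
def restrict (T : SemistandardYoungTableau ν) (h : κ ≤ ν) : SemistandardYoungTableau κ where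
  entry i j := if (i, j) ∈ κ then T i j else 0
  row_weak' hj hc := by
    rw [if_pos hc, if_pos (κ.up_left_mem le_rfl hj.le hc)]
    exact T.row_weak hj (h hc)
  col_strict' hi hc := by
    rw [if_pos hc, if_pos (κ.up_left_mem hi.le le_rfl hc)]
    exact T.col_strict hi (h hc)
  zeros' hc := if_neg hc

theorem restrict_apply (T : SemistandardYoungTableau ν) (h : κ ≤ ν) (i j : ℕ) :
    restrict T h i j = if (i, j) ∈ κ then T i j else 0 :=
  rfl

/-- Semistandard tableaux of shape `μ` with entries in the `a`-element alphabet `{0, …, a - 1}`. -/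
abbrev BoundedTableau (a : ℕ) (μ : YoungDiagram) : Type :=
  {T : SemistandardYoungTableau μ // ∀ i j, (i, j) ∈ μ → T i j < a}

namespace BoundedTableau

instance : Finite (BoundedTableau a μ) := by
  refine Finite.of_injective
    (β := μ.cells → Fin a) (fun T c => ⟨T.1 c.1.1 c.1.2, T.2 _ _ ((mem_cells _).1 c.2)⟩) ?_
  intro S T h
  refine Subtype.ext (SemistandardYoungTableau.ext fun i j => ?_)
  by_cases hc : (i, j) ∈ μ
  · exact congrArg Fin.val (congrFun h ⟨(i, j), (mem_cells _).2 hc⟩)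
  · rw [S.1.zeros hc, T.1.zeros hc]

theorem eq_bot (T : BoundedTableau 0 μ) : μ = ⊥ :=
  eq_bot_iff.2 fun _ hc => absurd (T.2 _ _ hc) (Nat.not_lt_zero _)

instance : Unique (BoundedTableau a ⊥) where
  default := ⟨default, fun _ _ hc => absurd hc (notMem_bot _)⟩
  uniq T := Subtype.ext <| SemistandardYoungTableau.ext fun i j => by
    rw [T.1.zeros (notMem_bot _), SemistandardYoungTableau.zeros _ (notMem_bot _)]

instance : Subsingleton (BoundedTableau 0 μ) where
  allEq S T := by
    obtain rfl := S.eq_bot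
    exact Subsingleton.elim S T

instance (p : YoungDiagram → Prop) : Subsingleton (Σ μ : {μ // p μ}, BoundedTableau 0 μ.1) where
  allEq := by
    rintro ⟨⟨μ, hμ⟩, S⟩ ⟨⟨ν, hν⟩, T⟩
    obtain rfl : μ = ν := S.eq_bot.trans T.eq_bot.symm
    rw [Subsingleton.elim S T]

theorem interlaces_sublevel (T : BoundedTableau (a + 1) ν) : sublevel T.1 a ≺ ν := by
  refine interlaces_rowLen_iff.2 ⟨sublevel_le _ _, fun i j hc => mem_sublevel.2 ⟨?_, ?_⟩⟩
  · exact ν.up_left_mem i.le_succ le_rfl hc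
  · exact (T.1.col_strict i.lt_succ_self hc).trans_le (Nat.lt_succ_iff.1 (T.2 _ _ hc))

/-- The extension of a tableau to a shape larger by a horizontal strip, whose cells are filled
with the new largest letter `a`. -/
def extend (T : BoundedTableau a κ) (h : κ ≺ ν) : BoundedTableau (a + 1) ν where
  val :=
    { entry := fun i j => if (i, j) ∈ κ then T.1 i j else if (i, j) ∈ ν then a else 0
      row_weak' := by
        intro i j₁ j₂ hj hc
        by_cases hκ : (i, j₂) ∈ κ
        · rw [if_pos hκ, if_pos (κ.up_left_mem le_rfl hj.le hκ)]
          exact T.1.row_weak hj hκ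
        · rw [if_neg hκ, if_pos hc]
          split_ifs with hκ₁
          exacts [(T.2 _ _ hκ₁).le, le_rfl, Nat.zero_le _]
      col_strict' := by
        intro i₁ i₂ j hi hc
        have hκ₁ : (i₁, j) ∈ κ := (interlaces_rowLen_iff.1 h).2 _ _ (ν.up_left_mem hi le_rfl hc)
        rw [if_pos hκ₁]
        by_cases hκ : (i₂, j) ∈ κ
        · rw [if_pos hκ]
          exact T.1.col_strict hi hκ
        · rw [if_neg hκ, if_pos hc]
          exact T.2 _ _ hκ₁
      zeros' := fun hc => by
        rw [if_neg fun hκ => hc ((interlaces_rowLen_iff.1 h).1 hκ), if_neg hc] }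
  property i j hc := by
    change (if (i, j) ∈ κ then T.1 i j else if (i, j) ∈ ν then a else 0) < a + 1
    split_ifs with hκ
    exacts [(T.2 _ _ hκ).trans a.lt_succ_self, a.lt_succ_self]

theorem extend_apply (T : BoundedTableau a κ) (h : κ ≺ ν) (i j : ℕ) :
    (T.extend h).1 i j = if (i, j) ∈ κ then T.1 i j else if (i, j) ∈ ν then a else 0 :=
  rfl

theorem sublevel_extend (T : BoundedTableau a κ) (h : κ ≺ ν) :
    sublevel (T.extend h).1 a = κ := by
  ext ⟨i, j⟩
  rw [mem_cells, mem_cells, mem_sublevel, extend_apply]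
  by_cases hκ : (i, j) ∈ κ
  · simp [hκ, (interlaces_rowLen_iff.1 h).1 hκ, T.2 _ _ hκ]
  · simp +contextual [hκ]

theorem sigma_ext {p : YoungDiagram → Prop} {x y : Σ κ : {κ // p κ}, BoundedTableau a κ.1}
    (shape : x.1.1 = y.1.1) (entry : ∀ i j, x.2.1 i j = y.2.1 i j) : x = y := by
  obtain ⟨⟨κ, hκ⟩, S⟩ := x
  obtain ⟨⟨μ, hμ⟩, T⟩ := y
  obtain rfl : κ = μ := shape
  obtain rfl : S = T := Subtype.ext (SemistandardYoungTableau.ext entry)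
  rfl

/-- Removing the cells that contain the largest letter, which form a horizontal strip. -/
def truncate (a : ℕ) (ν : YoungDiagram) :
    BoundedTableau (a + 1) ν ≃ Σ κ : {κ // κ ≺ ν}, BoundedTableau a κ.1 where
  toFun T := ⟨⟨sublevel T.1 a, T.interlaces_sublevel⟩,
    restrict T.1 (sublevel_le T.1 a), fun i j hc => by
      rw [restrict_apply, if_pos hc]
      exact (mem_sublevel.1 hc).2⟩
  invFun p := p.2.extend p.1.2
  left_inv T := by
    refine Subtype.ext (SemistandardYoungTableau.ext fun i j => ?_)
    simp only [extend_apply, restrict_apply, mem_sublevel]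
    by_cases hc : (i, j) ∈ ν
    · grind [T.2 i j hc]
    · simp [hc, T.1.zeros hc]
  right_inv := by
    rintro ⟨⟨κ, h⟩, T⟩
    refine sigma_ext (sublevel_extend T h) fun i j => ?_
    simp only [restrict_apply, sublevel_extend, extend_apply]
    by_cases hκ : (i, j) ∈ κ
    · simp only [if_pos hκ]
    · simp only [if_neg hκ, T.1.zeros hκ]

end BoundedTableau

end Tableaux

section Correspondence

/-- Interchange of the two sums in a double sum over pairs related by `r`, where the first index
is moreover constrained by `p`. -/
def sigmaSubtypeComm {α β : Type*} (p : α → Prop) (r : α → β → Prop) (γ : β → Type*) :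
    (Σ x : {x // p x}, Σ y : {y // r x.1 y}, γ y.1) ≃ Σ y, {x // p x ∧ r x y} × γ y where
  toFun q := ⟨q.2.1.1, ⟨q.1.1, q.1.2, q.2.1.2⟩, q.2.2⟩
  invFun q := ⟨⟨q.2.1.1, q.2.1.2.1⟩, ⟨q.1, q.2.1.2.2⟩, q.2.2⟩

open BoundedTableau

/-- The insertion of a matrix row into a tableau of shape `μ`. The tableau records the shapes
along the row of the growth diagram above the new one, the result those along the new row. -/
def insertRow : ∀ (b : ℕ) (μ : YoungDiagram),
    BoundedTableau b μ × (Fin b → ℕ) ≃ Σ ρ : {ρ // μ ≺ ρ}, BoundedTableau b ρ.1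
  | 0, μ =>
    equivOfSubsingletonOfSubsingleton (fun p => ⟨⟨μ, interlaces_rowLen_self μ⟩, p.1⟩) fun q =>
      (⟨default, fun i j hc =>
        absurd (q.2.2 i j ((interlaces_rowLen_iff.1 q.1.2).1 hc)) (Nat.not_lt_zero _)⟩, 0)
  | b + 1, μ =>
    calc
      BoundedTableau (b + 1) μ × (Fin (b + 1) → ℕ)
        ≃ (Σ κ : {κ // κ ≺ μ}, BoundedTableau b κ.1) × (ℕ × (Fin b → ℕ)) :=
          (truncate b μ).prodCongr (Fin.snocEquiv fun _ => ℕ).symm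
      _ ≃ (Σ κ : {κ // κ ≺ μ}, BoundedTableau b κ.1 × (Fin b → ℕ)) × ℕ :=
          ⟨fun q => (⟨q.1.1, q.1.2, q.2.2⟩, q.2.1), fun q => (⟨q.1.1, q.1.2.1⟩, q.2, q.1.2.2),
            fun _ => rfl, fun _ => rfl⟩
      _ ≃ (Σ κ : {κ // κ ≺ μ}, Σ ν : {ν // κ.1 ≺ ν}, BoundedTableau b ν.1) × ℕ :=
          (Equiv.sigmaCongrRight fun κ : {κ // κ ≺ μ} => insertRow b κ.1).prodCongr (Equiv.refl ℕ)
      _ ≃ (Σ ν, {κ // κ ≺ μ ∧ κ ≺ ν} × BoundedTableau b ν) × ℕ :=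
          (sigmaSubtypeComm (· ≺ μ) (· ≺ ·) _).prodCongr (Equiv.refl ℕ)
      _ ≃ Σ ν, ({κ // κ ≺ μ ∧ κ ≺ ν} × ℕ) × BoundedTableau b ν :=
          ⟨fun q => ⟨q.1.1, (q.1.2.1, q.2), q.1.2.2⟩, fun q => (⟨q.1, q.2.1.1, q.2.2⟩, q.2.1.2),
            fun _ => rfl, fun _ => rfl⟩
      _ ≃ Σ ν, {ρ // μ ≺ ρ ∧ ν ≺ ρ} × BoundedTableau b ν :=
          Equiv.sigmaCongrRight fun ν => (localRule μ ν).prodCongr (Equiv.refl _)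
      _ ≃ Σ ρ : {ρ // μ ≺ ρ}, Σ ν : {ν // ν ≺ ρ.1}, BoundedTableau b ν.1 :=
          (sigmaSubtypeComm (μ ≺ ·) (fun ρ ν => ν ≺ ρ) _).symm
      _ ≃ Σ ρ : {ρ // μ ≺ ρ}, BoundedTableau (b + 1) ρ.1 :=
          Equiv.sigmaCongrRight fun ρ => (truncate b ρ.1).symm

theorem card_insertRow : ∀ (b : ℕ) (μ : YoungDiagram) (p : BoundedTableau b μ × (Fin b → ℕ)),
    (insertRow b μ p).1.1.card = μ.card + ∑ c, p.2 c
  | 0, μ, p => by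
    rw [Fin.sum_univ_zero]
    rfl
  | b + 1, μ, (T, v) => by
    let κ : {κ // κ ≺ μ} := (truncate b μ T).1
    let q := insertRow b κ.1 ((truncate b μ T).2, fun c => v c.castSucc)
    have card_q : q.1.1.card = κ.1.card + ∑ c : Fin b, v c.castSucc := card_insertRow b κ.1 _
    have card_ρ : (insertRow (b + 1) μ (T, v)).1.1.card + κ.1.card =
        μ.card + q.1.1.card + v (Fin.last b) :=
      card_localRule (⟨κ.1, κ.2, q.1.2⟩, v (Fin.last b))
    calc
      (insertRow (b + 1) μ (T, v)).1.1.card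
        = μ.card + (∑ c : Fin b, v c.castSucc + v (Fin.last b)) := by omega
      _ = μ.card + ∑ c, v c := by rw [Fin.sum_univ_castSucc]

/-- The Robinson–Schensted–Knuth correspondence, in Fomin's growth diagram form. The recursion
removes the last row of the matrix, hence the largest letter of the first tableau. -/
def rsk : ∀ a b : ℕ,
    Matrix (Fin a) (Fin b) ℕ ≃ Σ μ, BoundedTableau a μ × BoundedTableau b μ
  | 0, b =>
    { toFun _ := ⟨⊥, default, default⟩
      invFun _ := 0
      left_inv _ := Subsingleton.elim _ _
      right_inv := by
        rintro ⟨μ, S, T⟩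
        obtain rfl := S.eq_bot
        exact congrArg (Sigma.mk ⊥) (Subsingleton.elim _ _) }
  | a + 1, b =>
    calc
      Matrix (Fin (a + 1)) (Fin b) ℕ
        ≃ (Fin b → ℕ) × Matrix (Fin a) (Fin b) ℕ := (Fin.snocEquiv fun _ => Fin b → ℕ).symm
      _ ≃ (Fin b → ℕ) × Σ μ, BoundedTableau a μ × BoundedTableau b μ :=
          (Equiv.refl _).prodCongr (rsk a b)
      _ ≃ Σ μ, BoundedTableau a μ × (BoundedTableau b μ × (Fin b → ℕ)) :=
          ⟨fun q => ⟨q.2.1, q.2.2.1, q.2.2.2, q.1⟩, fun q => (q.2.2.2, ⟨q.1, q.2.1, q.2.2.1⟩),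
            fun _ => rfl, fun _ => rfl⟩
      _ ≃ Σ μ, BoundedTableau a μ × Σ ν : {ν // μ ≺ ν}, BoundedTableau b ν.1 :=
          Equiv.sigmaCongrRight fun μ => (Equiv.refl _).prodCongr (insertRow b μ)
      _ ≃ Σ ν, (Σ μ : {μ // μ ≺ ν}, BoundedTableau a μ.1) × BoundedTableau b ν :=
          ⟨fun q => ⟨q.2.2.1.1, ⟨⟨q.1, q.2.2.1.2⟩, q.2.1⟩, q.2.2.2⟩,
            fun q => ⟨q.2.1.1.1, q.2.1.2, ⟨q.1, q.2.1.1.2⟩, q.2.2⟩,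
            fun _ => rfl, fun _ => rfl⟩
      _ ≃ Σ ν, BoundedTableau (a + 1) ν × BoundedTableau b ν :=
          Equiv.sigmaCongrRight fun ν => (truncate a ν).symm.prodCongr (Equiv.refl _)

theorem card_rsk : ∀ (a b : ℕ) (M : Matrix (Fin a) (Fin b) ℕ),
    (rsk a b M).1.card = ∑ r, ∑ c, M r c
  | 0, b, M => by
    rw [Fin.sum_univ_zero]
    rfl
  | a + 1, b, M => by
    let M' := M.submatrix Fin.castSucc id
    calc
      (rsk (a + 1) b M).1.card = (rsk a b M').1.card + ∑ c, M (Fin.last a) c :=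
        card_insertRow b (rsk a b M').1 ((rsk a b M').2.2, M (Fin.last a))
      _ = ∑ r, ∑ c, M r c := by
        rw [card_rsk a b M', Fin.sum_univ_castSucc]
        rfl

end Correspondence

theorem card_sigma_fst_mem {α : Type*} {β : α → Type*} [∀ x, Finite (β x)] (s : Finset α) :
    Nat.card {p : Σ x, β x // p.1 ∈ s} = ∑ x ∈ s, Nat.card (β x) := by
  rw [Nat.card_congr (Equiv.subtypeSigmaEquiv β (· ∈ s)), Nat.card_sigma,
    Finset.sum_coe_sort s fun x => Nat.card (β x)]

end RSK

/-- Combinatorial Cauchy identity via the Robinson–Schensted–Knuth correspondence: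
the number of `a × b` matrices of naturals with entry sum `n` equals the sum, over all
Young diagrams `μ` with `n` cells, of the product of the number of semistandard Young
tableaux of shape `μ` with entries in `{1,…,a}` (0-indexed: entries `< a`) and the number
with entries in `{1,…,b}`. -/
theorem stmt8 (a b n : ℕ) (s : Finset YoungDiagram)
    (hs : ∀ μ : YoungDiagram, μ ∈ s ↔ μ.card = n) :
    Nat.card {M : Matrix (Fin a) (Fin b) ℕ // (∑ r, ∑ c, M r c) = n} =
      ∑ μ ∈ s,
        Nat.card {T : SemistandardYoungTableau μ // ∀ i j, (i, j) ∈ μ → T.1 i j < a} *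
          Nat.card {T : SemistandardYoungTableau μ // ∀ i j, (i, j) ∈ μ → T.1 i j < b} := by
  let rskRestrict : {M : Matrix (Fin a) (Fin b) ℕ // (∑ r, ∑ c, M r c) = n} ≃
      {p : Σ μ, RSK.BoundedTableau a μ × RSK.BoundedTableau b μ // p.1 ∈ s} :=
    (RSK.rsk a b).subtypeEquiv fun M => by rw [hs, RSK.card_rsk]
  rw [Nat.card_congr rskRestrict, RSK.card_sigma_fst_mem]
  exact Finset.sum_congr rfl fun μ _ => Nat.card_prod _ _
end

section
/- Let m, n be natural numbers and K a field of characteristic zero (e.g. ℝ or ℂ). Let P be an m×m matrix over K, i : Fin n → Fin m a list of input sites, and g : Fin m → ℕ an occupation list with Σ_j g_j = n. Then Σ_f ∏_{k=1}^n P_{f(k), i(k)} = (1/g!) · Perm(P(ζ(g)|i)), where the sum is over all functions f : Fin n → Fin m such that each j ∈ Fin m is attained exactly g_j times, g! = ∏_j (g_j)!, ζ(g) is the list containing each mode j repeated g_j times (in increasing order), and P(ζ(g)|i) is the n×n matrix with (x,k) entry P_{ζ(g)_x, i(k)}. (Distinguishable particle model: when P_{j,i} = |U_{j,i}|² is the single-particle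 transition probability, the left side is the probability that n independent distinguishable particles starting in sites i arrive in the occupations g, and it equals (1/g!)Perm(|U|²(ζ(g)|i)).) -/
open scoped BigOperators

/-!
The functions with the same fibre sizes `g` as `z` are exactly the rearrangements `z ∘ σ`. They are
the orbit of `z` under a symmetric group, and the stabilizer of `z` is the product of the symmetric
groups on its fibres. Hence a sum over all `σ` of a quantity depending only on `z ∘ σ`, such as the
permanent of a matrix whose rows are repeated according to `z`, counts each rearrangement
`∏ j, (g j)!` times.
-/

section Rearrangement

open Finset Nat Equiv

variable {α ι M : Type*} [Fintype α] [DecidableEq ι]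

theorem exists_perm_comp_eq_iff {z f : α → ι} :
    (∃ σ : Perm α, z ∘ σ = f) ↔ ∀ j, #{x | f x = j} = #{x | z x = j} := by
  constructor
  · rintro ⟨σ, rfl⟩ j
    exact card_equiv σ (by simp)
  · intro h
    have fiberEquiv (j : ι) : Nonempty ({x // f x = j} ≃ {x // z x = j}) := by
      rw [← Fintype.card_eq, Fintype.card_subtype, Fintype.card_subtype, h]
    exact ⟨ofFiberEquiv fun j => (fiberEquiv j).some, funext (ofFiberEquiv_map _)⟩

variable [DecidableEq α]

theorem card_perm_comp_eq_comp (z : α → ι) (τ : Perm α) :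
    #{σ : Perm α | z ∘ σ = z ∘ τ} = #{σ : Perm α | z ∘ σ = z} := by
  refine card_equiv (Equiv.mulRight τ⁻¹) fun σ => ?_
  simp only [mem_filter_univ, Equiv.coe_mulRight, Perm.coe_mul, ← Function.comp_assoc]
  exact (comp_symm_eq τ z (z ∘ σ)).symm

variable [Fintype ι]

theorem card_perm_comp_eq {z f : α → ι} (h : ∀ j, #{x | f x = j} = #{x | z x = j}) :
    #{σ : Perm α | z ∘ σ = f} = ∏ j, (#{x | z x = j})! := by
  obtain ⟨τ, rfl⟩ := exists_perm_comp_eq_iff.2 h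
  rw [card_perm_comp_eq_comp]
  simpa only [Fintype.card_subtype] using DomMulAct.stabilizer_card z

theorem sum_perm_comp [AddCommMonoid M] (z : α → ι) (F : (α → ι) → M) :
    ∑ σ : Perm α, F (z ∘ σ) =
      (∏ j, (#{x | z x = j})!) • ∑ f with ∀ j, #{x | f x = j} = #{x | z x = j}, F f := by
  have image_comp : univ.image (fun σ : Perm α => z ∘ σ) =
      ({f | ∀ j, #{x | f x = j} = #{x | z x = j}} : Finset (α → ι)) := by
    ext f
    simp only [mem_image, mem_univ, true_and, mem_filter, exists_perm_comp_eq_iff]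
  rw [sum_comp F fun σ : Perm α => z ∘ σ, image_comp, smul_sum]
  exact sum_congr rfl fun f hf => by rw [card_perm_comp_eq (mem_filter.1 hf).2]

theorem stmt10_general {R κ : Type*} [CommSemiring R] (P : Matrix ι κ R) (i : α → κ) (g : ι → ℕ)
    (z : α → ι) (hzc : ∀ j, #{x | z x = j} = g j) :
    ((∏ j, (g j)! : ℕ) : R) *
        ∑ f : α → ι with ∀ j, #{x | f x = j} = g j, ∏ x, P (f x) (i x) =
      (Matrix.of fun x y => P (z x) (i y)).permanent := by
  obtain rfl : (fun j => #{x | z x = j}) = g := funext hzc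
  rw [← nsmul_eq_mul]
  exact (sum_perm_comp z fun f => ∏ x, P (f x) (i x)).symm

end Rearrangement

/-- Distinguishable particle model: the probability that `n` independent distinguishable
particles with single-particle transition matrix `P`, starting in sites `i`, arrive in the
occupations `g` equals `(1/g!) · Perm(P(ζ(g)|i))`, where `z = ζ(g)` is the weakly
increasing list containing each mode `j` repeated `g j` times. -/
theorem stmt10 {K : Type*} [Field K] [CharZero K] {m n : ℕ}
    (P : Matrix (Fin m) (Fin m) K) (i : Fin n → Fin m) (g : Fin m → ℕ)
    (hg : ∑ j, g j = n) (z : Fin n → Fin m) (hz : Monotone z)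
    (hzc : ∀ j, (Finset.univ.filter fun x => z x = j).card = g j) :
    ∑ f ∈ Finset.univ.filter
        (fun f : Fin n → Fin m =>
          ∀ j, (Finset.univ.filter fun x => f x = j).card = g j),
      ∏ x, P (f x) (i x) =
      ((∏ j, (g j).factorial : ℕ) : K)⁻¹ *
        (Matrix.of fun x y : Fin n => P (z x) (i y)).permanent := by
  rw [eq_inv_mul_iff_mul_eq₀ (Nat.cast_ne_zero.2 <|
    Finset.prod_ne_zero_iff.2 fun j _ => Nat.factorial_ne_zero (g j))]
  -- `convert` absorbs the `Fin`-specific instance deciding `∀ j`.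
  convert stmt10_general P i g z hzc
end

section
/- Let n ≥ 1, π a permutation of Fin n, and x a real number with 0 ≤ x < 1. Then the sum Σ x^(Σ_{y} j(y)) over all functions j : Fin n → ℕ satisfying j ∘ π = j converges, and equals ∏_c (1 − x^{|c|})^{−1}, where the product runs over the orbits c of π acting on Fin n (equivalently, over the cycles of π, with fixed points counted as cycles of length 1) and |c| denotes the cardinality of the orbit. In the paper's notation, Z(x)^n · k_x(π) = ∏_{c∈C(π)} Z(x^{ℓ(c)}) with Z(x) = 1/(1−x). -/
open scoped BigOperators

/-- The finite set of orbits (cycles, with fixed points as singleton orbits) of a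
permutation `π` of `Fin n`. -/
def orbitsFinset {n : ℕ} (π : Equiv.Perm (Fin n)) : Finset (Finset (Fin n)) :=
  Finset.univ.image fun y => Finset.univ.filter fun z => π.SameCycle y z

/-!
A function fixed by `π` is constant on the cycles of `π`, hence is an arbitrary function on the set
of cycles. Grouping the factors of `∏ y, w y (j y)` by cycles turns the sum over invariant functions
into a multiple series whose terms are products over the cycles, and an absolutely convergent series
of this kind is the product of the series of its factors. For `w y k = x ^ k` the factor of a cycle
`c` is the geometric series of ratio `x ^ #c`.
-/

open Filter Finset Topology

section PiProd

variable {ι : Type*} {κ : ι → Type*}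

theorem tendsto_eval_finset_atTop (i : ι) :
    Tendsto (fun s : ∀ i, Finset (κ i) => s i) atTop atTop := by
  classical
  exact (Function.monotone_eval i).tendsto_atTop_finset fun k =>
    ⟨Function.update (fun _ => ∅) i {k}, by simp⟩

variable [Fintype ι]

theorem tendsto_piFinset_atTop [DecidableEq ι] :
    Tendsto (fun s : ∀ i, Finset (κ i) => Fintype.piFinset s) atTop atTop :=
  Monotone.tendsto_atTop_finset Fintype.piFinset_subset fun k =>
    ⟨fun i => {k i}, by simp⟩

theorem exists_subset_piFinset [DecidableEq ι] (t : Finset (∀ i, κ i)) :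
    ∃ s : ∀ i, Finset (κ i), t ⊆ Fintype.piFinset s := by
  classical
  exact ⟨fun i => t.image (· i), fun k hk => Fintype.mem_piFinset.2 fun _ => mem_image_of_mem _ hk⟩

theorem summable_pi_prod_of_nonneg {f : ∀ i, κ i → ℝ} (hf₀ : ∀ i, 0 ≤ f i)
    (hf : ∀ i, Summable (f i)) : Summable fun k : ∀ i, κ i => ∏ i, f i (k i) := by
  classical
  have hprod₀ (k : ∀ i, κ i) : 0 ≤ ∏ i, f i (k i) := prod_nonneg fun i _ => hf₀ i (k i)
  refine summable_of_sum_le (c := ∏ i, ∑' k, f i k) hprod₀ fun t => ?_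
  obtain ⟨s, hts⟩ := exists_subset_piFinset t
  calc ∑ k ∈ t, ∏ i, f i (k i)
      ≤ ∑ k ∈ Fintype.piFinset s, ∏ i, f i (k i) :=
        sum_le_sum_of_subset_of_nonneg hts fun k _ _ => hprod₀ k
    _ = ∏ i, ∑ k ∈ s i, f i k := (prod_univ_sum s f).symm
    _ ≤ ∏ i, ∑' k, f i k :=
        prod_le_prod (fun i _ => sum_nonneg fun k _ => hf₀ i k)
          fun i _ => (hf i).sum_le_tsum (s i) fun k _ => hf₀ i k

variable {R : Type*} [NormedCommRing R] {f : ∀ i, κ i → R}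

theorem summable_norm_pi_prod (hf : ∀ i, Summable fun k => ‖f i k‖) :
    Summable fun k : ∀ i, κ i => ‖∏ i, f i (k i)‖ := by
  cases isEmpty_or_nonempty ι
  · exact Summable.of_finite
  · have hbound (k : ∀ i, κ i) : ‖∏ i, f i (k i)‖ ≤ ∏ i, ‖f i (k i)‖ :=
      norm_prod_le' univ univ_nonempty fun i => f i (k i)
    have hsum : Summable fun k : ∀ i, κ i => ∏ i, ‖f i (k i)‖ :=
      summable_pi_prod_of_nonneg (f := fun i k => ‖f i k‖) (fun i k => norm_nonneg (f i k)) hf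
    exact hsum.of_nonneg_of_le (fun k => norm_nonneg _) hbound

-- The sum over a box `∏ i, s i` factors, and such boxes are cofinal among the finite sets.
theorem hasSum_pi_prod {a : ι → R} (hf : ∀ i, Summable fun k => ‖f i k‖)
    (ha : ∀ i, HasSum (f i) (a i)) :
    HasSum (fun k : ∀ i, κ i => ∏ i, f i (k i)) (∏ i, a i) := by
  classical
  have hcoord (i : ι) :
      Tendsto (fun s : ∀ i, Finset (κ i) => ∑ k ∈ s i, f i k) atTop (𝓝 (a i)) :=
    Tendsto.comp (g := fun s => ∑ k ∈ s, f i k) (ha i) (tendsto_eval_finset_atTop i)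
  have hbox : Tendsto (fun s : ∀ i, Finset (κ i) => ∑ k ∈ Fintype.piFinset s, ∏ i, f i (k i))
      atTop (𝓝 (∏ i, a i)) := by
    simpa only [← prod_univ_sum] using tendsto_finsetProd univ fun i _ => hcoord i
  have hnorm : Summable fun k : ∀ i, κ i => ‖∏ i, f i (k i)‖ := summable_norm_pi_prod hf
  exact hasSum_of_subseq_of_summable hnorm tendsto_piFinset_atTop hbox

end PiProd

section Setoid

variable {α : Type*} [Fintype α] [DecidableEq α] (r : Setoid α) [DecidableRel r.r]

theorem parts_ofSetoid_eq_image_quotient :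
    (Finpartition.ofSetoid r).parts =
      univ.image fun q : Quotient r => ({y | ⟦y⟧ = q} : Finset α) := by
  ext c
  simp [Finpartition.ofSetoid, Finpartition.ofSetSetoid, Quotient.exists, Quotient.eq, r.comm]

theorem prod_parts_ofSetoid {M : Type*} [CommMonoid M] (g : Finset α → M) :
    ∏ c ∈ (Finpartition.ofSetoid r).parts, g c = ∏ q : Quotient r, g {y | ⟦y⟧ = q} := by
  rw [parts_ofSetoid_eq_image_quotient, prod_image]
  intro p _ q _ hpq
  induction p using Quotient.inductionOn with | h y =>
  simpa using (Finset.ext_iff.1 hpq y).1 (by simp)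

variable {r} in
theorem hasSum_prod_subtype_setoid_le_ker {κ R : Type*} [NormedCommRing R] {w : α → κ → R}
    {S : Finset α → R}
    (hw : ∀ c ∈ (Finpartition.ofSetoid r).parts, Summable fun k => ‖∏ y ∈ c, w y k‖)
    (hS : ∀ c ∈ (Finpartition.ofSetoid r).parts, HasSum (fun k => ∏ y ∈ c, w y k) (S c)) :
    HasSum (fun j : {j : α → κ // r ≤ Setoid.ker j} => ∏ y, w y (j.1 y))
      (∏ c ∈ (Finpartition.ofSetoid r).parts, S c) := by
  have hfiber (q : Quotient r) :
      ({y | ⟦y⟧ = q} : Finset α) ∈ (Finpartition.ofSetoid r).parts :=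
    parts_ofSetoid_eq_image_quotient r ▸ mem_image_of_mem _ (mem_univ q)
  have hprod (f : Quotient r → κ) :
      ∏ y, w y (f ⟦y⟧) = ∏ q, ∏ y with ⟦y⟧ = q, w y (f q) := by
    rw [← prod_fiberwise univ (Quotient.mk r)]
    refine prod_congr rfl fun q _ => prod_congr rfl fun y hy => ?_
    rw [(mem_filter.1 hy).2]
  rw [prod_parts_ofSetoid, ← (Setoid.liftEquiv r).symm.hasSum_iff]
  exact (hasSum_pi_prod (fun q => hw _ (hfiber q)) fun q => hS _ (hfiber q)).congr_fun hprod

end Setoid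

theorem comp_perm_eq_self_iff_setoid_le_ker {α β : Type*} {π : Equiv.Perm α} {j : α → β} :
    j ∘ π = j ↔ Equiv.Perm.SameCycle.setoid π ≤ Setoid.ker j := by
  refine ⟨fun h y z => ?_, fun h => funext fun y => h (Equiv.Perm.SameCycle.refl π y).apply_left⟩
  have hpow (i : ℤ) : j ((π ^ i) y) = j y := by
    induction i with
    | zero => rfl
    | succ i ih =>
      rw [add_comm, zpow_one_add, Equiv.Perm.mul_apply]
      exact (congrFun h _).trans ih
    | pred i ih =>
      rw [← ih, ← congrFun h, Function.comp_apply, ← Equiv.Perm.mul_apply, ← zpow_one_add,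
        add_sub_cancel]
  rintro ⟨i, rfl⟩
  exact (hpow i).symm

instance decidableRelSameCycleSetoid {α : Type*} [Fintype α] [DecidableEq α] (π : Equiv.Perm α) :
    DecidableRel (Equiv.Perm.SameCycle.setoid π).r :=
  inferInstanceAs (DecidableRel π.SameCycle)

/-- The partition of `α` into the cycles of `π`, each fixed point being a cycle of length one. -/
def cyclePartition {α : Type*} [Fintype α] [DecidableEq α] (π : Equiv.Perm α) :
    Finpartition (univ : Finset α) :=
  Finpartition.ofSetoid (Equiv.Perm.SameCycle.setoid π)

theorem hasSum_prod_subtype_comp_perm_eq_self {α κ R : Type*} [Fintype α] [DecidableEq α]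
    [NormedCommRing R] {π : Equiv.Perm α} {w : α → κ → R} {S : Finset α → R}
    (hw : ∀ c ∈ (cyclePartition π).parts, Summable fun k => ‖∏ y ∈ c, w y k‖)
    (hS : ∀ c ∈ (cyclePartition π).parts, HasSum (fun k => ∏ y ∈ c, w y k) (S c)) :
    HasSum (fun j : {j : α → κ // j ∘ π = j} => ∏ y, w y (j.1 y))
      (∏ c ∈ (cyclePartition π).parts, S c) := by
  rw [← (Equiv.subtypeEquivRight fun _ => comp_perm_eq_self_iff_setoid_le_ker.symm).hasSum_iff]
  exact hasSum_prod_subtype_setoid_le_ker (r := Equiv.Perm.SameCycle.setoid π) hw hS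

theorem stmt11_general {α K : Type*} [Fintype α] [DecidableEq α] [NormedField K]
    (π : Equiv.Perm α) {x : K} (hx : ‖x‖ < 1) :
    HasSum (fun j : {j : α → ℕ // j ∘ π = j} => x ^ ∑ y, j.1 y)
      (∏ c ∈ (cyclePartition π).parts, (1 - x ^ #c)⁻¹) := by
  have hweight (c : Finset α) (k : ℕ) : ∏ _y ∈ c, x ^ k = (x ^ #c) ^ k := by
    rw [prod_const, pow_right_comm]
  have hnorm {c : Finset α} (hc : c ∈ (cyclePartition π).parts) : ‖x ^ #c‖ < 1 := by
    rw [norm_pow]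
    exact pow_lt_one₀ (norm_nonneg x) hx
      (card_ne_zero.2 ((cyclePartition π).nonempty_of_mem_parts hc))
  simp only [← prod_pow_eq_pow_sum]
  refine hasSum_prod_subtype_comp_perm_eq_self (w := fun _ k => x ^ k)
    (fun c hc => ?_) fun c hc => ?_
  · simpa only [hweight] using summable_norm_geometric_of_norm_lt_one (hnorm hc)
  · simpa only [hweight] using hasSum_geometric_of_norm_lt_one (hnorm hc)

theorem orbitsFinset_eq_parts_cyclePartition {n : ℕ} (π : Equiv.Perm (Fin n)) :
    orbitsFinset π = (cyclePartition π).parts :=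
  rfl

/-- For `0 ≤ x < 1`, the sum `Σ x^(Σ_y j(y))` over all `π`-invariant functions
`j : Fin n → ℕ` converges and equals `∏_c (1 − x^{|c|})⁻¹`, the product running over the
orbits of `π` (fixed points counted as orbits of size 1). -/
theorem stmt11 {n : ℕ} (hn : 1 ≤ n) (π : Equiv.Perm (Fin n)) (x : ℝ)
    (h0 : 0 ≤ x) (h1 : x < 1) :
    HasSum (fun j : {j : Fin n → ℕ // j ∘ ⇑π = j} => x ^ (∑ y, j.1 y))
      (∏ c ∈ orbitsFinset π, (1 - x ^ c.card)⁻¹) := by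
  rw [orbitsFinset_eq_parts_cyclePartition]
  exact stmt11_general π (by rwa [Real.norm_of_nonneg h0])
end

section
/- Fix n ≥ 1. The following two statements are equivalent. (Lieb's permanental dominance for immanants) For every positive semidefinite n×n complex matrix M and every irreducible complex character χ of the symmetric group S_n, the normalized immanant (1/χ(1)) Σ_{σ∈S_n} χ(σ) ∏_{x=1}^n M_{x,σ(x)} is at most Perm(M) (both quantities are real for positive semidefinite M). (Weak generalized bunching) For every m ≥ n, every m×m unitary matrix U, every subset S of the output sites {1,…,m}, every injective list of input sites i : Fin n → {1,…,m}, and every irreducible complex character χ of S_n, the normalized immanant of the Gram matrix G with entries G_{x,y} = Σ_{s∈S} conj(U_{s,i(x)}) · U_{s,i(y)} is at most Perm(G). (Equivalently, the generalized bunching probability b(S|U,i,φ_λ) of the permutation-invariant single-occupancy state supported on the λ irrep never exceeds b(S|U,i,φ_{(n)}) for the fully bosonic state.) -/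
open scoped BigOperators ComplexOrder

/-- `χ` is an irreducible complex character of the symmetric group `S_n`. -/
def IsIrreducibleCharacter (n : ℕ) (χ : Equiv.Perm (Fin n) → ℂ) : Prop :=
  ∃ V : FDRep ℂ (Equiv.Perm (Fin n)), CategoryTheory.Simple V ∧ χ = FDRep.character V

/-- The normalized generalized matrix function (normalized immanant) of a matrix `M`
associated to the character `χ` of `S_n`: `(1/χ(e)) Σ_σ χ(σ) ∏_x M_{x,σ(x)}`. -/
noncomputable def normImmanant {n : ℕ} (χ : Equiv.Perm (Fin n) → ℂ)
    (M : Matrix (Fin n) (Fin n) ℂ) : ℂ :=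
  (χ 1)⁻¹ * ∑ σ : Equiv.Perm (Fin n), χ σ * ∏ x, M x (σ x)

/-!
The Gram matrix of weak bunching is `Vᴴ * V` for the submatrix `V` of `U` with rows in `S` and
columns `i x`, hence positive semidefinite. Conversely, a positive contraction `N` is the Gram
matrix of the first block column of the unitary dilation `[[√N, -√(1 - N)], [√(1 - N), √N]]`
restricted to its upper rows, and every positive semidefinite matrix becomes a contraction after
multiplication by some `c > 0`. Normalized immanants and permanents are both homogeneous of degree
`n`, so the factor `c ^ n` cancels from the inequality.
-/

section FunctionalCalculus

variable {A : Type*} [Ring A] [StarRing A] [TopologicalSpace A] [Algebra ℝ A] [PartialOrder A]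
  [StarOrderedRing A] [ContinuousFunctionalCalculus ℝ A IsSelfAdjoint] [NonnegSpectrumClass ℝ A]

theorem commute_sqrt_sqrt [IsTopologicalRing A] [T2Space A] {a b : A} (h : Commute a b) :
    Commute (CFC.sqrt a) (CFC.sqrt b) := by
  rw [CFC.sqrt_eq_cfc, CFC.sqrt_eq_cfc]
  exact ((h.cfc_nnreal _).symm.cfc_nnreal _).symm

theorem exists_pos_smul_le_one {a : A} (ha : IsSelfAdjoint a) : ∃ c : ℝ, 0 < c ∧ c • a ≤ 1 := by
  obtain ⟨r, hr⟩ := (ContinuousFunctionalCalculus.isCompact_spectrum (R := ℝ) a).bddAbove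
  have hpos : 0 < max r 1 := lt_max_of_lt_right one_pos
  refine ⟨(max r 1)⁻¹, inv_pos.2 hpos, ?_⟩
  rw [← cfc_const_mul_id (max r 1)⁻¹ a, cfc_le_one_iff _ a]
  intro x hx
  exact inv_mul_le_one_of_le₀ ((hr hx).trans (le_max_left r 1)) hpos.le

end FunctionalCalculus

section Dilation

open Matrix
open scoped MatrixOrder

variable {ι κ 𝕜 : Type*} [Fintype ι] [DecidableEq ι]

theorem fromBlocks_mem_unitaryGroup [CommRing 𝕜] [StarRing 𝕜] {A B : Matrix ι ι 𝕜}
    (hA : A.IsHermitian) (hB : B.IsHermitian) (hAB : Commute A B) (h : A * A + B * B = 1) :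
    fromBlocks A (-B) B A ∈ unitaryGroup (ι ⊕ ι) 𝕜 := by
  rw [mem_unitaryGroup_iff', star_eq_conjTranspose, fromBlocks_conjTranspose, fromBlocks_multiply,
    ← fromBlocks_one, conjTranspose_neg, hA.eq, hB.eq]
  congr 1
  · rw [mul_neg, hAB.eq, neg_add_cancel]
  · rw [neg_mul, hAB.eq, neg_add_cancel]
  · rw [neg_mul_neg, add_comm, h]

theorem reindex_mem_unitaryGroup [CommRing 𝕜] [StarRing 𝕜] [Fintype κ] [DecidableEq κ]
    (e : ι ≃ κ) {U : Matrix ι ι 𝕜} (hU : U ∈ unitaryGroup ι 𝕜) :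
    reindex e e U ∈ unitaryGroup κ 𝕜 := by
  rw [mem_unitaryGroup_iff, star_eq_conjTranspose] at hU ⊢
  rw [conjTranspose_reindex, reindex_apply, reindex_apply, submatrix_mul_equiv, hU,
    submatrix_one_equiv]

/-- The Halmos dilation of a positive contraction `N` to a unitary matrix of twice the size, with
blocks `√N` and `√(1 - N)`. It is defined for every `N`, but `CFC.sqrt` is `0` on matrices that are
not positive semidefinite, so it is meaningful only for `0 ≤ N ≤ 1`. -/
noncomputable def sqrtDilation [RCLike 𝕜] (N : Matrix ι ι 𝕜) : Matrix (ι ⊕ ι) (ι ⊕ ι) 𝕜 :=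
  fromBlocks (CFC.sqrt N) (-CFC.sqrt (1 - N)) (CFC.sqrt (1 - N)) (CFC.sqrt N)

theorem sqrtDilation_mem_unitaryGroup [RCLike 𝕜] {N : Matrix ι ι 𝕜} (h₀ : 0 ≤ N) (h₁ : N ≤ 1) :
    sqrtDilation N ∈ unitaryGroup (ι ⊕ ι) 𝕜 := by
  refine fromBlocks_mem_unitaryGroup (CFC.sqrt_nonneg N).posSemidef.isHermitian
    (CFC.sqrt_nonneg (1 - N)).posSemidef.isHermitian
    (commute_sqrt_sqrt ((Commute.one_right N).sub_right (Commute.refl N))) ?_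
  rw [CFC.sqrt_mul_sqrt_self N h₀, CFC.sqrt_mul_sqrt_self (1 - N) (sub_nonneg.2 h₁),
    add_sub_cancel]

end Dilation

section BunchingGram

open Matrix
open scoped MatrixOrder

variable {ι κ κ' μ μ' 𝕜 : Type*}

/-- The Gram matrix of bosons that enter an interferometer with transfer matrix `U` at the sites
`i x`, their output amplitudes being truncated to the set `S` of sites. The rows of `U` are the
output sites; neither unitarity of `U` nor injectivity of `i` is built in. -/
def bunchingGram [NonUnitalNonAssocSemiring 𝕜] [Star 𝕜] (U : Matrix μ κ 𝕜) (S : Finset μ)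
    (i : ι → κ) : Matrix ι ι 𝕜 :=
  of fun x y ↦ ∑ s ∈ S, star (U s (i x)) * U s (i y)

theorem bunchingGram_eq_conjTranspose_mul_self [NonUnitalNonAssocSemiring 𝕜] [Star 𝕜]
    (U : Matrix μ κ 𝕜) (S : Finset μ) (i : ι → κ) :
    bunchingGram U S i =
      (U.submatrix (Subtype.val : S → μ) i)ᴴ * U.submatrix (Subtype.val : S → μ) i := by
  ext x y
  exact (Finset.sum_coe_sort S fun s ↦ star (U s (i x)) * U s (i y)).symm

theorem posSemidef_bunchingGram [Finite ι] [RCLike 𝕜] (U : Matrix μ κ 𝕜) (S : Finset μ)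
    (i : ι → κ) : (bunchingGram U S i).PosSemidef := by
  rw [bunchingGram_eq_conjTranspose_mul_self]
  exact posSemidef_conjTranspose_mul_self _

theorem bunchingGram_reindex [NonUnitalNonAssocSemiring 𝕜] [Star 𝕜] (e : μ ≃ μ') (f : κ ≃ κ')
    (U : Matrix μ κ 𝕜) (S : Finset μ) (i : ι → κ) :
    bunchingGram (reindex e f U) (S.map e.toEmbedding) (f ∘ i) = bunchingGram U S i := by
  ext x y
  simp [bunchingGram]

theorem bunchingGram_fromBlocks [NonUnitalNonAssocSemiring 𝕜] [Star 𝕜] [Fintype μ]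
    (A : Matrix μ ι 𝕜) (B : Matrix μ κ 𝕜) (C : Matrix μ' ι 𝕜) (D : Matrix μ' κ 𝕜) :
    bunchingGram (fromBlocks A B C D) (Finset.univ.map .inl) Sum.inl = Aᴴ * A := by
  ext x y
  simp [bunchingGram, mul_apply]

variable [Fintype ι] [DecidableEq ι] [RCLike 𝕜]

theorem bunchingGram_sqrtDilation {N : Matrix ι ι 𝕜} (hN : 0 ≤ N) :
    bunchingGram (sqrtDilation N) (Finset.univ.map .inl) Sum.inl = N := by
  rw [sqrtDilation, bunchingGram_fromBlocks, (CFC.sqrt_nonneg N).posSemidef.isHermitian.eq,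
    CFC.sqrt_mul_sqrt_self N hN]

theorem exists_unitary_bunchingGram_eq_smul {M : Matrix ι ι 𝕜} (hM : M.PosSemidef) :
    ∃ c : 𝕜, 0 < c ∧ ∃ U ∈ unitaryGroup (ι ⊕ ι) 𝕜,
      bunchingGram U (Finset.univ.map .inl) Sum.inl = c • M := by
  obtain ⟨c, hc, hcM⟩ := exists_pos_smul_le_one hM.isHermitian.isSelfAdjoint
  have hcM₀ : 0 ≤ c • M := (hM.smul hc.le).nonneg
  exact ⟨c, RCLike.ofReal_pos.2 hc, sqrtDilation (c • M), sqrtDilation_mem_unitaryGroup hcM₀ hcM,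
    (bunchingGram_sqrtDilation hcM₀).trans (RCLike.real_smul_eq_coe_smul c M)⟩

end BunchingGram

section Immanant

variable {n : ℕ} (χ : Equiv.Perm (Fin n) → ℂ)

theorem normImmanant_smul (c : ℂ) (M : Matrix (Fin n) (Fin n) ℂ) :
    normImmanant χ (c • M) = c ^ n * normImmanant χ M := by
  simp only [normImmanant, Matrix.smul_apply, smul_eq_mul, Finset.prod_mul_distrib,
    Finset.prod_const, Finset.card_univ, Fintype.card_fin, mul_left_comm _ (c ^ n),
    ← Finset.mul_sum]

theorem normImmanant_smul_le_permanent_smul_iff {c : ℂ} (hc : 0 < c)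
    (M : Matrix (Fin n) (Fin n) ℂ) :
    normImmanant χ (c • M) ≤ (c • M).permanent ↔ normImmanant χ M ≤ M.permanent := by
  rw [normImmanant_smul, Matrix.permanent_smul, Fintype.card_fin]
  exact mul_le_mul_iff_right₀ (pow_pos hc n)

theorem stmt14_general :
    (∀ M : Matrix (Fin n) (Fin n) ℂ, M.PosSemidef → normImmanant χ M ≤ M.permanent) ↔
      ∀ m : ℕ, n ≤ m → ∀ U ∈ Matrix.unitaryGroup (Fin m) ℂ, ∀ S : Finset (Fin m),
        ∀ i : Fin n → Fin m, Function.Injective i →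
          normImmanant χ (bunchingGram U S i) ≤ (bunchingGram U S i).permanent := by
  constructor
  · intro dominance m _ U _ S i _
    exact dominance _ (posSemidef_bunchingGram U S i)
  · intro bunching M hM
    obtain ⟨c, hc, U, hU, hUM⟩ := exists_unitary_bunchingGram_eq_smul hM
    rw [← normImmanant_smul_le_permanent_smul_iff χ hc, ← hUM,
      ← bunchingGram_reindex finSumFinEquiv finSumFinEquiv]
    exact bunching (n + n) (Nat.le_add_left n n) _ (reindex_mem_unitaryGroup finSumFinEquiv hU) _ _
      (finSumFinEquiv.injective.comp Sum.inl_injective)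

end Immanant

/-- Lieb's permanental dominance conjecture for immanants is equivalent to the weak
generalized bunching conjecture: for every `m ≥ n`, unitary `U`, subset `S` of output
sites and injective list `i` of input sites, the normalized immanants of the Gram matrix
`G_{x,y} = Σ_{s∈S} conj(U_{s,i(x)}) U_{s,i(y)}` are dominated by its permanent. -/
theorem stmt14 (n : ℕ) (hn : 1 ≤ n) :
    (∀ M : Matrix (Fin n) (Fin n) ℂ, M.PosSemidef →
        ∀ χ : Equiv.Perm (Fin n) → ℂ, IsIrreducibleCharacter n χ →
          normImmanant χ M ≤ M.permanent) ↔
      (∀ m : ℕ, n ≤ m → ∀ U : Matrix (Fin m) (Fin m) ℂ,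
          U ∈ Matrix.unitaryGroup (Fin m) ℂ →
          ∀ S : Finset (Fin m), ∀ i : Fin n → Fin m, Function.Injective i →
            ∀ χ : Equiv.Perm (Fin n) → ℂ, IsIrreducibleCharacter n χ →
              normImmanant χ
                  (Matrix.of fun x y : Fin n => ∑ s ∈ S, star (U s (i x)) * U s (i y)) ≤
                (Matrix.of fun x y : Fin n =>
                  ∑ s ∈ S, star (U s (i x)) * U s (i y)).permanent) :=
  ⟨fun h m hm U hU S i hi χ hχ ↦ (stmt14_general χ).1 (h · · χ hχ) m hm U hU S i hi,
    fun h M hM χ hχ ↦ (stmt14_general χ).2 (h · · · · · · · χ hχ) M hM⟩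
end
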